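/- arXiv:2502.11640 — 3 statements merged into one kernel-verified Lean document; each statement's English description precedes it below -/
import Mathlib

section
/- Let α > 1, let V be a real normed space whose dual V* is strictly convex (so the duality mapping is single-valued with value j), and let A : V → Set V* be a maximal-monotone multivalued operator. Suppose there exist δ > 0 and C ∈ ℝ such that ⟨v, z⟩ ≥ δ‖z‖_V^α + C for every z ∈ V and every v ∈ A(z). Then for every λ with 0 < λ < δ^{-1}, every x ∈ V, and every solution x_λ of the resolvent equation at x, the generalized Yosida approximation A_λ(x) := λ^{-1} j(x − x_λ) satisfies ⟨A_λ(x), x⟩ ≥ δ 2^{−α} ‖x‖_V^α + C. -/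
open NormedSpace Filter Topology

/-- The generalized duality mapping with exponent `α` on a real normed space `V`:
`J(u) = {v ∈ V* | ⟨v,u⟩ = ‖u‖^α = ‖v‖^{α/(α-1)}}`. -/
def genJ (α : ℝ) (V : Type*) [NormedAddCommGroup V] [NormedSpace ℝ V] (u : V) :
    Set (StrongDual ℝ V) :=
  {v : StrongDual ℝ V | v u = ‖u‖ ^ α ∧ ‖v‖ ^ (α / (α - 1)) = ‖u‖ ^ α}

/-- A multivalued operator `A : V → Set V*` is monotone if
`⟨v₁ - v₂, u₁ - u₂⟩ ≥ 0` for all `v₁ ∈ A u₁`, `v₂ ∈ A u₂`. -/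
def MonotoneOp {V : Type*} [NormedAddCommGroup V] [NormedSpace ℝ V]
    (A : V → Set (StrongDual ℝ V)) : Prop :=
  ∀ u₁ u₂ : V, ∀ v₁ ∈ A u₁, ∀ v₂ ∈ A u₂, 0 ≤ (v₁ - v₂) (u₁ - u₂)

/-- A monotone multivalued operator is maximal monotone if its graph is not properly
contained in the graph of any other monotone operator. -/
def MaximalMonotoneOp {V : Type*} [NormedAddCommGroup V] [NormedSpace ℝ V]
    (A : V → Set (StrongDual ℝ V)) : Prop :=
  MonotoneOp A ∧
    ∀ B : V → Set (StrongDual ℝ V), MonotoneOp B → (∀ u, A u ⊆ B u) → ∀ u, B u = A u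

/-!
Write `A_λ(x) = λ⁻¹ v` with `v ∈ J(x - x_λ)` and `λ⁻¹ v ∈ A(x_λ)`. Splitting `x = x_λ + (x - x_λ)`,
coercivity bounds `⟨A_λ(x), x_λ⟩` below by `δ ‖x_λ‖^α + C`, and the duality mapping together with
`δ ≤ λ⁻¹` bounds `⟨A_λ(x), x - x_λ⟩` below by `δ ‖x - x_λ‖^α`. Convexity of `t ↦ t ^ α` then gives
the estimate with the constant `2 ^ (1 - α)`, which is better than `2 ^ (-α)`. When the dual is
strictly convex, `j` is odd, which turns `-j(x_λ - x)` into `j(x - x_λ)`.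
-/

theorem two_rpow_one_sub_mul_norm_add_rpow_le {E : Type*} [SeminormedAddGroup E] {α : ℝ}
    (hα : 1 ≤ α) (x y : E) :
    2 ^ (1 - α) * ‖x + y‖ ^ α ≤ ‖x‖ ^ α + ‖y‖ ^ α := by
  have hpow : ‖x + y‖ ^ α ≤ 2 ^ (α - 1) * (‖x‖ ^ α + ‖y‖ ^ α) := calc
    ‖x + y‖ ^ α ≤ (‖x‖ + ‖y‖) ^ α := by gcongr; exact norm_add_le x y
    _ ≤ 2 ^ (α - 1) * (‖x‖ ^ α + ‖y‖ ^ α) := by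
      exact_mod_cast NNReal.rpow_add_le_mul_rpow_add_rpow ‖x‖₊ ‖y‖₊ hα
  rwa [← neg_sub, Real.rpow_neg zero_le_two, inv_mul_le_iff₀ (by positivity)]

theorem mul_norm_rpow_add_le_map_of_le_map_sub {E F : Type*} [SeminormedAddCommGroup E]
    [FunLike F E ℝ] [AddMonoidHomClass F E ℝ] {α δ C : ℝ} (hα : 1 ≤ α) (hδ : 0 ≤ δ) {f : F}
    {x z : E} (hz : δ * ‖z‖ ^ α + C ≤ f z) (hxz : δ * ‖x - z‖ ^ α ≤ f (x - z)) :
    δ * 2 ^ (1 - α) * ‖x‖ ^ α + C ≤ f x := by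
  have hsplit : 2 ^ (1 - α) * ‖x‖ ^ α ≤ ‖z‖ ^ α + ‖x - z‖ ^ α := by
    simpa only [add_sub_cancel] using two_rpow_one_sub_mul_norm_add_rpow_le hα z (x - z)
  calc
    δ * 2 ^ (1 - α) * ‖x‖ ^ α + C = δ * (2 ^ (1 - α) * ‖x‖ ^ α) + C := by ring
    _ ≤ δ * (‖z‖ ^ α + ‖x - z‖ ^ α) + C := by gcongr
    _ = (δ * ‖z‖ ^ α + C) + δ * ‖x - z‖ ^ α := by ring
    _ ≤ f z + f (x - z) := add_le_add hz hxz
    _ = f x := by rw [← map_add, add_sub_cancel]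

section DualityMapping

variable {α : ℝ} {V : Type*} [NormedAddCommGroup V] [NormedSpace ℝ V]

theorem neg_mem_genJ_neg_iff {u : V} {v : StrongDual ℝ V} :
    -v ∈ genJ α V (-u) ↔ v ∈ genJ α V u := by
  simp [genJ]

theorem norm_eq_of_mem_genJ (hα₀ : α ≠ 0) (hα₁ : α ≠ 1) {u : V} {v : StrongDual ℝ V}
    (hv : v ∈ genJ α V u) : ‖v‖ = ‖u‖ ^ (α - 1) := by
  have hexp : α / (α - 1) ≠ 0 := div_ne_zero hα₀ (sub_ne_zero.2 hα₁)
  rw [← Real.rpow_left_inj (norm_nonneg v) (by positivity) hexp, ← Real.rpow_mul (norm_nonneg u),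
    mul_div_cancel₀ α (sub_ne_zero.2 hα₁), hv.2]

theorem genJ_zero_subset (hα₀ : α ≠ 0) (hα₁ : α ≠ 1) : genJ α V 0 ⊆ {0} := fun v hv ↦ by
  have hnorm := norm_eq_of_mem_genJ hα₀ hα₁ hv
  rwa [norm_zero, Real.zero_rpow (sub_ne_zero.2 hα₁), norm_eq_zero] at hnorm

theorem norm_add_eq_of_mem_genJ (hα₀ : α ≠ 0) (hα₁ : α ≠ 1) {u : V} (hu : u ≠ 0)
    {v w : StrongDual ℝ V} (hv : v ∈ genJ α V u) (hw : w ∈ genJ α V u) :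
    ‖v + w‖ = ‖v‖ + ‖w‖ := by
  have hu' : 0 < ‖u‖ := norm_pos_iff.2 hu
  have hpow : ‖u‖ ^ (α - 1) * ‖u‖ = ‖u‖ ^ α := by
    rw [Real.rpow_sub_one hu'.ne', div_mul_cancel₀ _ hu'.ne']
  refine le_antisymm (norm_add_le v w) (le_of_mul_le_mul_right ?_ hu')
  calc
    (‖v‖ + ‖w‖) * ‖u‖ = (v + w) u := by
      rw [norm_eq_of_mem_genJ hα₀ hα₁ hv, norm_eq_of_mem_genJ hα₀ hα₁ hw, add_mul, hpow,
        add_apply, hv.1, hw.1]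
    _ ≤ ‖v + w‖ * ‖u‖ := (le_abs_self _).trans ((v + w).le_opNorm u)

theorem subsingleton_genJ [StrictConvexSpace ℝ (StrongDual ℝ V)] (hα₀ : α ≠ 0) (hα₁ : α ≠ 1)
    (u : V) : (genJ α V u).Subsingleton := by
  rcases eq_or_ne u 0 with rfl | hu
  · exact Set.subsingleton_singleton.anti (genJ_zero_subset hα₀ hα₁)
  · intro v hv w hw
    have hnorm : ‖v‖ = ‖w‖ :=
      (norm_eq_of_mem_genJ hα₀ hα₁ hv).trans (norm_eq_of_mem_genJ hα₀ hα₁ hw).symm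
    exact eq_of_norm_eq_of_norm_add_eq hnorm (norm_add_eq_of_mem_genJ hα₀ hα₁ hu hv hw)

theorem map_neg_of_forall_mem_genJ [StrictConvexSpace ℝ (StrongDual ℝ V)] (hα₀ : α ≠ 0)
    (hα₁ : α ≠ 1) {j : V → StrongDual ℝ V} (hj : ∀ u, j u ∈ genJ α V u) (u : V) :
    j (-u) = -j u :=
  subsingleton_genJ hα₀ hα₁ (-u) (hj (-u)) (neg_mem_genJ_neg_iff.2 (hj u))

theorem inv_smul_map_sub_eq_of_add_smul_eq_zero [StrictConvexSpace ℝ (StrongDual ℝ V)]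
    (hα₀ : α ≠ 0) (hα₁ : α ≠ 1) {j : V → StrongDual ℝ V} (hj : ∀ u, j u ∈ genJ α V u)
    {lam : ℝ} (hlam : lam ≠ 0) {x xl : V} {y : StrongDual ℝ V}
    (hres : j (xl - x) + lam • y = 0) : lam⁻¹ • j (x - xl) = y := by
  rw [← neg_sub, map_neg_of_forall_mem_genJ hα₀ hα₁ hj, neg_eq_of_add_eq_zero_right hres,
    inv_smul_smul₀ hlam]

end DualityMapping

theorem statement12_general {α : ℝ} (hα : 1 < α) {V : Type*} [NormedAddCommGroup V]
    [NormedSpace ℝ V] {A : V → Set (StrongDual ℝ V)} {δ C : ℝ} (hδ : 0 < δ)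
    (hcoer : ∀ z, ∀ v ∈ A z, δ * ‖z‖ ^ α + C ≤ v z) {lam : ℝ} (hlam : δ ≤ lam⁻¹) {x xl : V}
    {v : StrongDual ℝ V} (hv : v ∈ genJ α V (x - xl)) (hvA : lam⁻¹ • v ∈ A xl) :
    δ * 2 ^ (1 - α) * ‖x‖ ^ α + C ≤ (lam⁻¹ • v) x := by
  refine mul_norm_rpow_add_le_map_of_le_map_sub hα.le hδ.le (hcoer xl _ hvA) ?_
  calc
    δ * ‖x - xl‖ ^ α ≤ lam⁻¹ * ‖x - xl‖ ^ α := by gcongr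
    _ = (lam⁻¹ • v) (x - xl) := by rw [smul_apply, hv.1, smul_eq_mul]

/-- coercivity of the generalized Yosida approximation: if `A` is
maximal monotone and coercive with constants `δ, C`, then for `0 < λ < δ⁻¹` the
Yosida approximation satisfies `⟨A_λ(x), x⟩ ≥ δ 2^{-α} ‖x‖^α + C`. -/
theorem statement12 (α : ℝ) (hα : 1 < α) (V : Type*) [NormedAddCommGroup V]
    [NormedSpace ℝ V] [StrictConvexSpace ℝ (StrongDual ℝ V)]
    (j : V → StrongDual ℝ V) (hj : ∀ u : V, j u ∈ genJ α V u)
    (A : V → Set (StrongDual ℝ V)) (hA : MaximalMonotoneOp A)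
    (δ C : ℝ) (hδ : 0 < δ)
    (hcoer : ∀ z : V, ∀ v ∈ A z, δ * ‖z‖ ^ α + C ≤ v z)
    (lam : ℝ) (hlam0 : 0 < lam) (hlam : lam < δ⁻¹)
    (x xl : V) (y : StrongDual ℝ V) (hy : y ∈ A xl)
    (hres : j (xl - x) + lam • y = 0) :
    δ * 2 ^ (-α) * ‖x‖ ^ α + C ≤ (lam⁻¹ • j (x - xl)) x := by
  have hyosida : lam⁻¹ • j (x - xl) = y :=
    inv_smul_map_sub_eq_of_add_smul_eq_zero (zero_lt_one.trans hα).ne' hα.ne' hj hlam0.ne'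
      hres
  calc
    δ * 2 ^ (-α) * ‖x‖ ^ α + C ≤ δ * 2 ^ (1 - α) * ‖x‖ ^ α + C := by gcongr <;> linarith
    _ ≤ (lam⁻¹ • j (x - xl)) x := statement12_general hα hδ hcoer
      (le_inv_of_le_inv₀ hlam0 hlam.le) (hj _) (hyosida ▸ hy)
end

section
/- Let α > 1 and let V be a reflexive real Banach space such that both V and V* are strictly convex, and let A : V → Set V* be a monotone multivalued operator. If there exists λ > 0 such that the range of A + λJ is all of V* — i.e., for every y ∈ V* there exist x ∈ V, w ∈ A(x) and z ∈ J(x) with λ z + w = y — then A is maximal monotone. -/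
open NormedSpace Filter Topology

/-!
Let `v ∈ B u`, where `B` is a monotone extension of `A`, and choose `j ∈ J u`. Solving
`λ z + w = λ j + v` with `w ∈ A x` and `z ∈ J x` gives `v - w = -λ (j - z)`, so monotonicity of `B`
forces `⟨j - z, u - x⟩ ≤ 0`. Strict convexity of `V` makes `J` strictly monotone, hence `u = x`;
strict convexity of `V*` makes `J` single-valued, hence `j = z` and `v = w ∈ A u`.
-/

/-- Strict monotonicity of a multivalued operator `T : V → Set V*`: the monotonicity inequality is
strict between values at distinct points. -/
def StrictMonotoneOp {V : Type*} [NormedAddCommGroup V] [NormedSpace ℝ V]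
    (T : V → Set (StrongDual ℝ V)) : Prop :=
  ∀ u₁ u₂ : V, u₁ ≠ u₂ → ∀ v₁ ∈ T u₁, ∀ v₂ ∈ T u₂, 0 < (v₁ - v₂) (u₁ - u₂)

theorem rpow_sub_rpow_mul_sub_pos {s t p : ℝ} (hs : 0 ≤ s) (ht : 0 ≤ t) (hp : 0 < p)
    (hst : s ≠ t) : 0 < (s ^ p - t ^ p) * (s - t) := by
  rcases hst.lt_or_gt with h | h
  · exact mul_pos_of_neg_of_neg (sub_neg.2 (Real.rpow_lt_rpow hs h hp)) (sub_neg.2 h)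
  · exact mul_pos (sub_pos.2 (Real.rpow_lt_rpow ht h hp)) (sub_pos.2 h)

section NormAttaining

variable {V : Type*} [NormedAddCommGroup V] [NormedSpace ℝ V]

theorem apply_le_norm_mul_norm (v : StrongDual ℝ V) (u : V) : v u ≤ ‖v‖ * ‖u‖ :=
  (le_abs_self _).trans (v.le_opNorm u)

theorem sameRay_of_apply_eq_norm_mul_norm [StrictConvexSpace ℝ V] {v : StrongDual ℝ V} {x y : V}
    (hv : v ≠ 0) (hx : v x = ‖v‖ * ‖x‖) (hy : v y = ‖v‖ * ‖y‖) : SameRay ℝ x y := by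
  have hsum : ‖v‖ * (‖x‖ + ‖y‖) ≤ ‖v‖ * ‖x + y‖ := calc
    ‖v‖ * (‖x‖ + ‖y‖) = v (x + y) := by rw [map_add, hx, hy, mul_add]
    _ ≤ ‖v‖ * ‖x + y‖ := apply_le_norm_mul_norm v (x + y)
  exact sameRay_iff_norm_add.2
    ((norm_add_le x y).antisymm (le_of_mul_le_mul_left hsum (norm_pos_iff.2 hv)))

theorem sameRay_dual_of_apply_eq_norm_mul_norm [StrictConvexSpace ℝ (StrongDual ℝ V)]
    {v w : StrongDual ℝ V} {u : V} (hu : u ≠ 0) (hv : v u = ‖v‖ * ‖u‖) (hw : w u = ‖w‖ * ‖u‖) :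
    SameRay ℝ v w := by
  have hnorm : ‖inclusionInDoubleDual ℝ V u‖ = ‖u‖ := (inclusionInDoubleDualLi ℝ).norm_map u
  have hne : inclusionInDoubleDual ℝ V u ≠ 0 :=
    (map_ne_zero_iff (inclusionInDoubleDual ℝ V) (inclusionInDoubleDualLi ℝ).injective).2 hu
  apply sameRay_of_apply_eq_norm_mul_norm hne
  · rw [dual_def, hnorm, hv, mul_comm]
  · rw [dual_def, hnorm, hw, mul_comm]

end NormAttaining

section DualityMapping

variable {α : ℝ} {V : Type*} [NormedAddCommGroup V] [NormedSpace ℝ V]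

theorem mem_genJ_iff (hα : 1 < α) {u : V} {v : StrongDual ℝ V} :
    v ∈ genJ α V u ↔ ‖v‖ = ‖u‖ ^ (α - 1) ∧ v u = ‖v‖ * ‖u‖ := by
  have hconj : α.HolderConjugate (α / (α - 1)) := .conjExponent hα
  have hpow : ‖u‖ ^ α = (‖u‖ ^ (α - 1)) ^ (α / (α - 1)) := by
    rw [← Real.rpow_mul (norm_nonneg u), mul_div_cancel₀ _ hconj.sub_one_ne_zero]
  have hnorm : ‖v‖ ^ (α / (α - 1)) = ‖u‖ ^ α ↔ ‖v‖ = ‖u‖ ^ (α - 1) := by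
    rw [hpow, Real.rpow_left_inj (norm_nonneg v) (by positivity) hconj.symm.ne_zero]
  have hmul : ‖u‖ ^ α = ‖u‖ ^ (α - 1) * ‖u‖ := by
    rw [← Real.rpow_add_one' (norm_nonneg u) (by simpa using hconj.ne_zero), sub_add_cancel]
  change v u = ‖u‖ ^ α ∧ ‖v‖ ^ (α / (α - 1)) = ‖u‖ ^ α ↔ _
  rw [hnorm, and_comm]
  exact and_congr_right fun hv ↦ by rw [hmul, hv]

theorem genJ_nonempty (hα : 1 < α) (u : V) : (genJ α V u).Nonempty := by
  rcases eq_or_ne u 0 with rfl | hu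
  · exact ⟨0, (mem_genJ_iff hα).2 (by simp [Real.zero_rpow (sub_pos.2 hα).ne'])⟩
  · obtain ⟨g, hg, (hgu : g u = ‖u‖)⟩ := exists_dual_vector ℝ u (norm_ne_zero_iff.2 hu)
    have hnorm : ‖‖u‖ ^ (α - 1) • g‖ = ‖u‖ ^ (α - 1) := by
      rw [norm_smul, hg, mul_one, Real.norm_of_nonneg (by positivity)]
    refine ⟨‖u‖ ^ (α - 1) • g, (mem_genJ_iff hα).2 ⟨hnorm, ?_⟩⟩
    rw [hnorm, smul_apply, hgu, smul_eq_mul]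

theorem eq_zero_of_zero_mem_genJ (hα : 1 < α) {u : V} (h : 0 ∈ genJ α V u) : u = 0 := by
  have hpow : ‖u‖ ^ (α - 1) = 0 := by simpa using ((mem_genJ_iff hα).1 h).1.symm
  exact norm_eq_zero.1 ((Real.rpow_eq_zero (norm_nonneg u) (sub_pos.2 hα).ne').1 hpow)

theorem genJ_subsingleton [StrictConvexSpace ℝ (StrongDual ℝ V)] (hα : 1 < α) (u : V) :
    (genJ α V u).Subsingleton := by
  intro v hv w hw
  obtain ⟨hv_norm, hvu⟩ := (mem_genJ_iff hα).1 hv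
  obtain ⟨hw_norm, hwu⟩ := (mem_genJ_iff hα).1 hw
  have hnorm : ‖v‖ = ‖w‖ := hv_norm.trans hw_norm.symm
  rcases eq_or_ne u 0 with rfl | hu
  · have hv_zero : ‖v‖ = 0 := by simpa [(sub_pos.2 hα).ne'] using hv_norm
    have hw_zero : ‖w‖ = 0 := hnorm.symm.trans hv_zero
    rw [norm_eq_zero.1 hv_zero, norm_eq_zero.1 hw_zero]
  · exact (sameRay_dual_of_apply_eq_norm_mul_norm hu hvu hwu).eq_of_norm_eq hnorm

theorem eq_of_mem_genJ_of_mem_genJ [StrictConvexSpace ℝ V] (hα : 1 < α) {x y : V}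
    {v : StrongDual ℝ V} (hx : v ∈ genJ α V x) (hy : v ∈ genJ α V y) : x = y := by
  rcases eq_or_ne v 0 with rfl | hv
  · rw [eq_zero_of_zero_mem_genJ hα hx, eq_zero_of_zero_mem_genJ hα hy]
  · obtain ⟨hx_norm, hvx⟩ := (mem_genJ_iff hα).1 hx
    obtain ⟨hy_norm, hvy⟩ := (mem_genJ_iff hα).1 hy
    have hnorm : ‖x‖ = ‖y‖ := (Real.rpow_left_inj (norm_nonneg x) (norm_nonneg y)
      (sub_pos.2 hα).ne').1 (hx_norm.symm.trans hy_norm)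
    exact (sameRay_of_apply_eq_norm_mul_norm hv hvx hvy).eq_of_norm_eq hnorm

theorem strictMonotoneOp_genJ [StrictConvexSpace ℝ V] (hα : 1 < α) :
    StrictMonotoneOp (genJ α V) := by
  intro u₁ u₂ hne v₁ hv₁ v₂ hv₂
  obtain ⟨hnorm₁, hvu₁⟩ := (mem_genJ_iff hα).1 hv₁
  obtain ⟨hnorm₂, hvu₂⟩ := (mem_genJ_iff hα).1 hv₂
  have hle₁ : v₁ u₂ ≤ ‖v₁‖ * ‖u₂‖ := apply_le_norm_mul_norm v₁ u₂
  have hle₂ : v₂ u₁ ≤ ‖v₂‖ * ‖u₁‖ := apply_le_norm_mul_norm v₂ u₁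
  have hexpand : (v₁ - v₂) (u₁ - u₂) = (‖v₁‖ - ‖v₂‖) * (‖u₁‖ - ‖u₂‖)
      + (‖v₁‖ * ‖u₂‖ - v₁ u₂) + (‖v₂‖ * ‖u₁‖ - v₂ u₁) := by
    simp only [sub_apply, map_sub, hvu₁, hvu₂]
    ring
  rcases eq_or_ne ‖u₁‖ ‖u₂‖ with hu | hu
  · have hlt : v₁ u₂ < ‖v₁‖ * ‖u₂‖ := hle₁.lt_of_ne fun heq ↦
      hne (eq_of_mem_genJ_of_mem_genJ hα hv₁ ((mem_genJ_iff hα).2 ⟨hu ▸ hnorm₁, heq⟩))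
    have hzero : (‖v₁‖ - ‖v₂‖) * (‖u₁‖ - ‖u₂‖) = 0 := by rw [hu, sub_self, mul_zero]
    linarith
  · have hpos : 0 < (‖v₁‖ - ‖v₂‖) * (‖u₁‖ - ‖u₂‖) := by
      rw [hnorm₁, hnorm₂]
      exact rpow_sub_rpow_mul_sub_pos (norm_nonneg u₁) (norm_nonneg u₂) (sub_pos.2 hα) hu
    linarith

end DualityMapping

theorem MonotoneOp.maximalMonotoneOp_of_range_add_smul {V : Type*} [NormedAddCommGroup V]
    [NormedSpace ℝ V] {A T : V → Set (StrongDual ℝ V)} (hA : MonotoneOp A)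
    (hT : StrictMonotoneOp T) (hT_nonempty : ∀ u, (T u).Nonempty)
    (hT_subsingleton : ∀ u, (T u).Subsingleton) {lam : ℝ} (hlam : 0 < lam)
    (hrange : ∀ y : StrongDual ℝ V, ∃ x : V, ∃ w ∈ A x, ∃ z ∈ T x, lam • z + w = y) :
    MaximalMonotoneOp A := by
  refine ⟨hA, fun B hB hAB u ↦ Set.Subset.antisymm (fun v hv ↦ ?_) (hAB u)⟩
  obtain ⟨j, hj⟩ := hT_nonempty u
  obtain ⟨x, w, hw, z, hz, hsum⟩ := hrange (lam • j + v)
  have hmono : 0 ≤ (v - w) (u - x) := hB u x v hv w (hAB x hw)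
  have hdiff : v - w = -(lam • (j - z)) := by
    rw [smul_sub, neg_sub, sub_eq_sub_iff_add_eq_add, add_comm v, hsum]
  have hux : u = x := by
    by_contra hne
    have hpos : 0 < lam * (j - z) (u - x) := mul_pos hlam (hT u x hne j hj z hz)
    rw [hdiff, neg_apply, smul_apply, smul_eq_mul] at hmono
    linarith
  subst hux
  obtain rfl : j = z := hT_subsingleton u hj hz
  rwa [← add_left_cancel hsum]

theorem statement13_general (α : ℝ) (hα : 1 < α) (V : Type*) [NormedAddCommGroup V]
    [NormedSpace ℝ V] [StrictConvexSpace ℝ V] [StrictConvexSpace ℝ (StrongDual ℝ V)]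
    (A : V → Set (StrongDual ℝ V)) (hA : MonotoneOp A)
    (hrange : ∃ lam > (0 : ℝ), ∀ y : StrongDual ℝ V,
      ∃ x : V, ∃ w ∈ A x, ∃ z ∈ genJ α V x, lam • z + w = y) :
    MaximalMonotoneOp A := by
  obtain ⟨lam, hlam, hsurj⟩ := hrange
  exact hA.maximalMonotoneOp_of_range_add_smul (strictMonotoneOp_genJ hα) (genJ_nonempty hα)
    (genJ_subsingleton hα) hlam hsurj

/-- on a reflexive Banach space with strictly convex space and dual,
a monotone operator satisfying the range condition `R(A + λJ) = V*` for some
`λ > 0` is maximal monotone. -/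
theorem statement13 (α : ℝ) (hα : 1 < α) (V : Type*) [NormedAddCommGroup V]
    [NormedSpace ℝ V] [CompleteSpace V] [StrictConvexSpace ℝ V]
    [StrictConvexSpace ℝ (StrongDual ℝ V)]
    (hrefl : Function.Surjective (inclusionInDoubleDual ℝ V))
    (A : V → Set (StrongDual ℝ V)) (hA : MonotoneOp A)
    (hrange : ∃ lam > (0 : ℝ), ∀ y : StrongDual ℝ V,
      ∃ x : V, ∃ w ∈ A x, ∃ z ∈ genJ α V x, lam • z + w = y) :
    MaximalMonotoneOp A :=
  statement13_general α hα V A hA hrange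
end

section
/- Let α > 1 and let V be a reflexive real Banach space such that both V and V* are strictly convex, and let A : V → Set V* be a maximal-monotone multivalued operator. Then for every λ > 0 the range of A + λJ is all of V*: for every y ∈ V* there exist x ∈ V, w ∈ A(x) and z ∈ J(x) such that λ z + w = y. -/
open NormedSpace Filter Topology

/-!
By Fenchel–Young, `v ∈ J x` exactly when `⟨v, x⟩ = ‖x‖ ^ α / α + ‖v‖ ^ β / β`, with `β` conjugate
to `α`. Replacing `A` by `x ↦ λ⁻¹ • (A x - y)`, which is again maximal monotone, reduces the theorem
to finding `v ∈ A x` with `-v ∈ J x`.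

The concave function `-(‖x‖ ^ α / α + ‖v‖ ^ β / β)` lies below `⟨v, x⟩`, which by maximality lies
below the Fitzpatrick function of `A`, so Hahn–Banach puts a continuous affine function between the
two outer ones. By reflexivity its linear part is `(x, v) ↦ ⟨q, x⟩ + ⟨v, p⟩`. The lower estimate
bounds the constant term from below by the conjugate `‖p‖ ^ α / α + ‖q‖ ^ β / β`; the upper one then
forces `q ∈ A p`, and evaluated at `(p, q)` itself it yields equality in Fenchel–Young for
`(p, -q)`.
-/

section FenchelYoung

theorem continuous_norm_rpow_div {E : Type*} [SeminormedAddCommGroup E] {α : ℝ} (hα : 0 ≤ α) :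
    Continuous fun x : E => ‖x‖ ^ α / α :=
  (continuous_norm.rpow_const fun _ => Or.inr hα).div_const α

variable {E : Type*} [SeminormedAddCommGroup E] [NormedSpace ℝ E] {α β : ℝ}

theorem convexOn_norm_rpow_div (hα : 1 ≤ α) :
    ConvexOn ℝ Set.univ fun x : E => ‖x‖ ^ α / α := by
  have hpow : ConvexOn ℝ Set.univ fun x : E => ‖x‖ ^ α := by
    refine ⟨convex_univ, fun x _ y _ s t hs ht hst => ?_⟩
    calc ‖s • x + t • y‖ ^ α ≤ (s • ‖x‖ + t • ‖y‖) ^ α := by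
          gcongr
          exact convexOn_univ_norm.2 trivial trivial hs ht hst
      _ ≤ s • ‖x‖ ^ α + t • ‖y‖ ^ α :=
          (convexOn_rpow hα).2 (norm_nonneg x) (norm_nonneg y) hs ht hst
  simpa only [smul_eq_mul, div_eq_inv_mul] using
    hpow.smul (inv_nonneg.2 (zero_le_one.trans hα))

theorem apply_le_norm_rpow_div_add (h : α.HolderConjugate β) (f : StrongDual ℝ E) (x : E) :
    f x ≤ ‖x‖ ^ α / α + ‖f‖ ^ β / β :=
  calc f x ≤ ‖f‖ * ‖x‖ := (le_abs_self _).trans (f.le_opNorm x)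
    _ = ‖x‖ * ‖f‖ := mul_comm _ _
    _ ≤ _ := Real.young_inequality_of_nonneg (norm_nonneg x) (norm_nonneg f) h

theorem exists_mul_sub_rpow_div_eq (h : α.HolderConjugate β) {s : ℝ} (hs : 0 ≤ s) :
    ∃ t, 0 ≤ t ∧ t * s - t ^ α / α = s ^ β / β := by
  have ht : 0 ≤ s ^ (β / α) := Real.rpow_nonneg hs _
  refine ⟨s ^ (β / α), ht, ?_⟩
  have hpow : (s ^ (β / α)) ^ α = s ^ β := by
    rw [← Real.rpow_mul hs, div_mul_cancel₀ _ h.ne_zero]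
  linarith [(Real.young_inequality_eq_iff_of_nonneg ht hs h).2 hpow]

theorem norm_rpow_div_le_of_forall_apply_le (h : α.HolderConjugate β) {f : StrongDual ℝ E}
    {m : ℝ} (hf : ∀ x, f x ≤ ‖x‖ ^ α / α + m) : ‖f‖ ^ β / β ≤ m := by
  obtain ⟨t, ht, hts⟩ := exists_mul_sub_rpow_div_eq h (norm_nonneg f)
  have hm : 0 ≤ m := by simpa [Real.zero_rpow h.ne_zero] using hf 0
  have hα := h.nonneg
  have hle : ∀ x, ‖x‖ = 1 → t * f x ≤ t ^ α / α + m := fun x hx => by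
    simpa [norm_smul, hx, abs_of_nonneg ht] using hf (t • x)
  have hnorm : ‖t • f‖ ≤ t ^ α / α + m :=
    ContinuousLinearMap.opNorm_le_of_unit_norm (by positivity) fun x hx =>
      abs_le'.2 ⟨hle x hx, by simpa using hle (-x) (by rwa [norm_neg])⟩
  rw [norm_smul, Real.norm_of_nonneg ht] at hnorm
  linarith

theorem mem_genJ_of_norm_rpow_div_add_le {E : Type*} [NormedAddCommGroup E] [NormedSpace ℝ E]
    (h : α.HolderConjugate β) {f : StrongDual ℝ E} {x : E}
    (hfx : ‖x‖ ^ α / α + ‖f‖ ^ β / β ≤ f x) : f ∈ genJ α E x := by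
  have hle : f x ≤ ‖x‖ * ‖f‖ := by
    simpa only [mul_comm] using (le_abs_self _).trans (f.le_opNorm x)
  have hyoung := Real.young_inequality_of_nonneg (norm_nonneg x) (norm_nonneg f) h
  have hpow : ‖x‖ ^ α = ‖f‖ ^ β :=
    (Real.young_inequality_eq_iff_of_nonneg (norm_nonneg x) (norm_nonneg f) h).1 (by linarith)
  refine ⟨?_, by rw [← h.conjugate_eq, hpow]⟩
  calc f x = ‖x‖ ^ α / α + ‖f‖ ^ β / β := by linarith
    _ = ‖x‖ ^ α * (α⁻¹ + β⁻¹) := by rw [← hpow]; ring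
    _ = ‖x‖ ^ α := by rw [h.inv_add_inv_eq_one, mul_one]

end FenchelYoung

section Sandwich

variable {E : Type*} [AddCommGroup E] [Module ℝ E] [TopologicalSpace E] [IsTopologicalAddGroup E]
  [ContinuousSMul ℝ E]

theorem exists_affine_between_of_concaveOn {f : E → ℝ} {T : Set (E × ℝ)}
    (hf : ConcaveOn ℝ Set.univ f) (hfc : Continuous f) (hT : Convex ℝ T) (hne : T.Nonempty)
    (hfT : ∀ p ∈ T, f p.1 ≤ p.2) :
    ∃ (φ : StrongDual ℝ E) (m : ℝ), (∀ x, f x ≤ φ x + m) ∧ ∀ p ∈ T, φ p.1 + m ≤ p.2 := by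
  have hSconv : Convex ℝ {p : E × ℝ | p.2 < f p.1} := by
    simpa only [Set.mem_univ, true_and] using hf.convex_strict_hypograph
  have hSopen : IsOpen {p : E × ℝ | p.2 < f p.1} :=
    isOpen_lt continuous_snd (hfc.comp continuous_fst)
  obtain ⟨Φ, u, hΦS, hΦT⟩ := geometric_hahn_banach_open hSconv hSopen hT
    (Set.disjoint_left.2 fun p hpS hpT => (hfT p hpT).not_gt hpS)
  set ψ : StrongDual ℝ E := Φ.comp (.inl ℝ E ℝ) with hψ
  set k : ℝ := Φ (0, 1) with hk
  have hΦ (x : E) (r : ℝ) : Φ (x, r) = ψ x + r * k := by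
    rw [hψ, hk, ← smul_eq_mul, ← map_smul]
    simp [← map_add]
  have hkpos : 0 < k := by
    obtain ⟨⟨x, r⟩, hxr⟩ := hne
    have hfr : f x ≤ r := hfT _ hxr
    have hbelow : Φ (x, f x - 1) < u := hΦS _ (sub_one_lt (f x))
    have habove : u ≤ Φ (x, r) := hΦT _ hxr
    rw [hΦ] at hbelow habove
    exact pos_of_mul_pos_right (a := r - (f x - 1)) (by linarith) (by linarith)
  have hgraph (x : E) : Φ (x, (-k⁻¹ • ψ) x + u / k) = u := by
    rw [hΦ, smul_apply, smul_eq_mul]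
    field_simp
    ring
  refine ⟨-k⁻¹ • ψ, u / k, fun x => ?_, fun ⟨x, r⟩ hxr => ?_⟩
  · by_contra! hlt
    exact (hΦS (x, (-k⁻¹ • ψ) x + u / k) hlt).ne (hgraph x)
  · have hle := (hgraph x).trans_le (hΦT _ hxr)
    rw [hΦ, hΦ] at hle
    exact le_of_mul_le_mul_right (by linarith) hkpos

end Sandwich

section Bidual

variable {V : Type*} [SeminormedAddCommGroup V] [NormedSpace ℝ V]

theorem exists_forall_apply_prod_eq (hrefl : Function.Surjective (inclusionInDoubleDual ℝ V))
    (φ : StrongDual ℝ (V × StrongDual ℝ V)) :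
    ∃ (p : V) (q : StrongDual ℝ V), ∀ x v, φ (x, v) = q x + v p := by
  obtain ⟨p, hp⟩ := hrefl (φ.comp (.inr ℝ V (StrongDual ℝ V)))
  refine ⟨p, φ.comp (.inl ℝ V (StrongDual ℝ V)), fun x v => ?_⟩
  rw [← dual_def ℝ V p v, hp]
  simp [← map_add]

theorem norm_rpow_div_add_norm_rpow_div_le {α β m : ℝ} (h : α.HolderConjugate β) {p : V}
    {q : StrongDual ℝ V}
    (hpq : ∀ (x : V) (v : StrongDual ℝ V), -(‖x‖ ^ α / α + ‖v‖ ^ β / β) ≤ q x + v p + m) :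
    ‖p‖ ^ α / α + ‖q‖ ^ β / β ≤ m := by
  have hq (v : StrongDual ℝ V) : ‖q‖ ^ β / β ≤ v p + ‖v‖ ^ β / β + m :=
    norm_rpow_div_le_of_forall_apply_le h fun x => by
      have := hpq (-x) v
      rw [norm_neg, map_neg] at this
      linarith
  have hp : ‖inclusionInDoubleDual ℝ V p‖ ^ α / α ≤ m - ‖q‖ ^ β / β :=
    norm_rpow_div_le_of_forall_apply_le h.symm fun v => by
      have := hq (-v)
      rw [norm_neg, neg_apply] at this
      rw [dual_def]
      linarith
  have hnorm : ‖inclusionInDoubleDual ℝ V p‖ = ‖p‖ :=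
    (inclusionInDoubleDualLi (𝕜 := ℝ) (E := V)).norm_map p
  rw [hnorm] at hp
  linarith

end Bidual

section MaximalMonotone

variable {V : Type*} [NormedAddCommGroup V] [NormedSpace ℝ V] {A : V → Set (StrongDual ℝ V)}

theorem MaximalMonotoneOp.mem_of_forall_nonneg (hA : MaximalMonotoneOp A) {x : V}
    {v : StrongDual ℝ V} (hv : ∀ a, ∀ w ∈ A a, 0 ≤ (w - v) (a - x)) : v ∈ A x := by
  have hB : MonotoneOp fun a => A a ∪ {w | a = x ∧ w = v} := by
    rintro a b w (hw | ⟨rfl, rfl⟩) z (hz | ⟨rfl, rfl⟩)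
    · exact hA.1 a b w hw z hz
    · exact hv a w hw
    · rw [← neg_sub z, ← neg_sub b, map_neg, neg_apply, neg_neg]
      exact hv b z hz
    · simp
  rw [← hA.2 _ hB (fun _ => Set.subset_union_left) x]
  exact Or.inr ⟨rfl, rfl⟩

theorem maximalMonotoneOp_iff_forall_mem_iff :
    MaximalMonotoneOp A ↔ ∀ x v, v ∈ A x ↔ ∀ a, ∀ w ∈ A a, 0 ≤ (w - v) (a - x) := by
  refine ⟨fun hA x v => ⟨fun hv a w hw => hA.1 a x w hw v hv, hA.mem_of_forall_nonneg⟩,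
    fun hA => ⟨fun a x w hw v hv => (hA x v).1 hv a w hw, fun B hB hAB x => ?_⟩⟩
  exact (hAB x).antisymm' fun v hv => (hA x v).2 fun a w hw => hB a x w (hAB a hw) v hv

theorem MaximalMonotoneOp.preimage_smul_add (hA : MaximalMonotoneOp A) {c : ℝ} (hc : 0 < c)
    (y : StrongDual ℝ V) : MaximalMonotoneOp fun x => {v | c • v + y ∈ A x} := by
  refine maximalMonotoneOp_iff_forall_mem_iff.2 fun x v => ?_
  have hsurj : Function.Surjective fun w : StrongDual ℝ V => c • w + y :=
    fun w => ⟨c⁻¹ • (w - y), by simp [smul_inv_smul₀ hc.ne']⟩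
  have hpair (a : V) (w : StrongDual ℝ V) :
      0 ≤ (c • w + y - (c • v + y)) (a - x) ↔ 0 ≤ (w - v) (a - x) := by
    rw [add_sub_add_right_eq_sub, sub_apply, smul_apply, smul_apply, ← smul_sub, ← sub_apply,
      smul_eq_mul, mul_nonneg_iff_of_pos_left hc]
  calc c • v + y ∈ A x
      ↔ ∀ a, ∀ w ∈ A a, 0 ≤ (w - (c • v + y)) (a - x) :=
        maximalMonotoneOp_iff_forall_mem_iff.1 hA x _
    _ ↔ ∀ a w, c • w + y ∈ A a → 0 ≤ (c • w + y - (c • v + y)) (a - x) :=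
        forall_congr' fun _ => hsurj.forall
    _ ↔ ∀ a w, c • w + y ∈ A a → 0 ≤ (w - v) (a - x) := by simp only [hpair]

theorem MaximalMonotoneOp.exists_mem (hA : MaximalMonotoneOp A) : ∃ x v, v ∈ A x := by
  by_contra! hempty
  exact hempty 0 0 (hA.mem_of_forall_nonneg fun a w hw => (hempty a w hw).elim)

/-- The epigraph of the Fitzpatrick function
`(x, v) ↦ sup {⟨w, x⟩ + ⟨v, a⟩ - ⟨w, a⟩ | w ∈ A a}` of a multivalued operator `A`, a convex set to
which Hahn–Banach separation applies. Encoding the function by its epigraph avoids the value `∞`.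
-/
def fitzpatrickEpigraph (A : V → Set (StrongDual ℝ V)) : Set ((V × StrongDual ℝ V) × ℝ) :=
  {e | ∀ a, ∀ w ∈ A a, w e.1.1 + e.1.2 a - w a ≤ e.2}

theorem convex_fitzpatrickEpigraph : Convex ℝ (fitzpatrickEpigraph A) := by
  intro d hd e he s t hs ht hst a w hw
  calc w (s • d.1.1 + t • e.1.1) + (s • d.1.2 + t • e.1.2) a - w a
      = s * (w d.1.1 + d.1.2 a - w a) + t * (w e.1.1 + e.1.2 a - w a) := by
        simp only [map_add, map_smul, add_apply, smul_apply, smul_eq_mul]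
        linear_combination (w a) * hst
    _ ≤ s * d.2 + t * e.2 := by gcongr <;> [exact hd a w hw; exact he a w hw]

theorem MonotoneOp.mem_fitzpatrickEpigraph (hA : MonotoneOp A) {x : V} {v : StrongDual ℝ V}
    (hv : v ∈ A x) : ((x, v), v x) ∈ fitzpatrickEpigraph A := fun a w hw => by
  have hmono := hA a x w hw v hv
  simp only [sub_apply, map_sub] at hmono
  linarith

theorem MaximalMonotoneOp.apply_le_of_mem_fitzpatrickEpigraph (hA : MaximalMonotoneOp A) {x : V}
    {v : StrongDual ℝ V} {r : ℝ} (hr : ((x, v), r) ∈ fitzpatrickEpigraph A) : v x ≤ r := by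
  by_contra! hlt
  have hv : v ∈ A x := hA.mem_of_forall_nonneg fun a w hw => by
    have hle : w x + v a - w a ≤ r := hr a w hw
    simp only [sub_apply, map_sub]
    linarith
  have hle : v x + v x - v x ≤ r := hr x v hv
  linarith

theorem MaximalMonotoneOp.exists_affine_between (hA : MaximalMonotoneOp A) {α β : ℝ}
    (h : α.HolderConjugate β) (hrefl : Function.Surjective (inclusionInDoubleDual ℝ V)) :
    ∃ (p : V) (q : StrongDual ℝ V) (m : ℝ),
      (∀ (x : V) (v : StrongDual ℝ V), -(‖x‖ ^ α / α + ‖v‖ ^ β / β) ≤ q x + v p + m) ∧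
        ∀ x, ∀ v ∈ A x, q x + v p + m ≤ v x := by
  have hconv : ConvexOn ℝ Set.univ fun e : V × StrongDual ℝ V =>
      ‖e.1‖ ^ α / α + ‖e.2‖ ^ β / β :=
    ((convexOn_norm_rpow_div h.lt.le).comp_linearMap (.fst ℝ V (StrongDual ℝ V))).add
      ((convexOn_norm_rpow_div h.symm.lt.le).comp_linearMap (.snd ℝ V (StrongDual ℝ V)))
  have hcont : Continuous fun e : V × StrongDual ℝ V => ‖e.1‖ ^ α / α + ‖e.2‖ ^ β / β :=
    ((continuous_norm_rpow_div h.nonneg).comp continuous_fst).add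
      ((continuous_norm_rpow_div h.symm.nonneg).comp continuous_snd)
  have hbelow : ∀ e ∈ fitzpatrickEpigraph A, -(‖e.1.1‖ ^ α / α + ‖e.1.2‖ ^ β / β) ≤ e.2 := by
    rintro ⟨⟨x, v⟩, r⟩ hr
    have hyoung := apply_le_norm_rpow_div_add h v (-x)
    rw [norm_neg, map_neg] at hyoung
    linarith [hA.apply_le_of_mem_fitzpatrickEpigraph hr]
  obtain ⟨x₀, v₀, hv₀⟩ := hA.exists_mem
  obtain ⟨φ, m, hlower, hupper⟩ := exists_affine_between_of_concaveOn hconv.neg hcont.neg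
    convex_fitzpatrickEpigraph ⟨_, hA.1.mem_fitzpatrickEpigraph hv₀⟩ hbelow
  obtain ⟨p, q, hφ⟩ := exists_forall_apply_prod_eq hrefl φ
  refine ⟨p, q, m, fun x v => hφ x v ▸ hlower (x, v), fun x v hv => ?_⟩
  exact hφ x v ▸ hupper _ (hA.1.mem_fitzpatrickEpigraph hv)

theorem MaximalMonotoneOp.exists_mem_neg_mem_genJ (hA : MaximalMonotoneOp A) {α : ℝ} (hα : 1 < α)
    (hrefl : Function.Surjective (inclusionInDoubleDual ℝ V)) :
    ∃ x, ∃ v ∈ A x, -v ∈ genJ α V x := by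
  have h := Real.HolderConjugate.conjExponent hα
  obtain ⟨p, q, m, hlower, hupper⟩ := hA.exists_affine_between h hrefl
  have hm := norm_rpow_div_add_norm_rpow_div_le h hlower
  have hyoung := apply_le_norm_rpow_div_add h (-q) p
  rw [norm_neg, neg_apply] at hyoung
  have hq : q ∈ A p := hA.mem_of_forall_nonneg fun a w hw => by
    simp only [sub_apply, map_sub]
    linarith [hupper a w hw]
  refine ⟨p, q, hq, mem_genJ_of_norm_rpow_div_add_le h ?_⟩
  rw [norm_neg, neg_apply]
  linarith [hupper p q hq]

end MaximalMonotone

theorem statement14_general {α : ℝ} (hα : 1 < α) {V : Type*} [NormedAddCommGroup V]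
    [NormedSpace ℝ V] (hrefl : Function.Surjective (inclusionInDoubleDual ℝ V))
    {A : V → Set (StrongDual ℝ V)} (hA : MaximalMonotoneOp A) {lam : ℝ} (hlam : 0 < lam)
    (y : StrongDual ℝ V) : ∃ x : V, ∃ w ∈ A x, ∃ z ∈ genJ α V x, lam • z + w = y := by
  obtain ⟨x, v, hv, hJ⟩ := (hA.preimage_smul_add hlam y).exists_mem_neg_mem_genJ hα hrefl
  exact ⟨x, lam • v + y, hv, -v, hJ, by rw [smul_neg, neg_add_cancel_left]⟩

/-- on a reflexive Banach space with strictly convex space and dual,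
a maximal monotone operator satisfies the range condition `R(A + λJ) = V*` for
every `λ > 0`. -/
theorem statement14 (α : ℝ) (hα : 1 < α) (V : Type*) [NormedAddCommGroup V]
    [NormedSpace ℝ V] [CompleteSpace V] [StrictConvexSpace ℝ V]
    [StrictConvexSpace ℝ (StrongDual ℝ V)]
    (hrefl : Function.Surjective (inclusionInDoubleDual ℝ V))
    (A : V → Set (StrongDual ℝ V)) (hA : MaximalMonotoneOp A)
    (lam : ℝ) (hlam : 0 < lam) :
    ∀ y : StrongDual ℝ V, ∃ x : V, ∃ w ∈ A x, ∃ z ∈ genJ α V x, lam • z + w = y :=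
  statement14_general hα hrefl hA hlam
end
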